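/- arXiv:1501.03682 — 4 statements merged into one kernel-verified Lean document; each statement's English description precedes it below -/
import Mathlib

section
/- (Central symmetry of φ^{(n,m)}, part of Theorem 4.6, Fourier form.) For every integer n ≥ 2, every real μ > 1, and every integer m ≥ 1, the complex conjugate of Φ^{(n,m)}(ω) equals e^{i (n+1) 2^{-m} ω} · Φ^{(n,m)}(ω) for all real ω. Equivalently, the refinable ripplet φ^{(n,m)}, whose Fourier transform is Φ^{(n,m)}, is symmetric about the midpoint of its support: φ^{(n,m)}(2^{-m}(n+1) − x) = φ^{(n,m)}(x). -/
open MeasureTheory Filter Complex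

/-- Binomial coefficient `binom p q` extended to integer `q`, zero outside `0 ≤ q ≤ p`. -/
noncomputable def binomZ (p : ℕ) (q : ℤ) : ℝ :=
  if 0 ≤ q then (p.choose q.toNat : ℝ) else 0

/-- The nonstationary mask `a^{(n,m)}_α` with tension parameter `μ`. -/
noncomputable def maskNS (n m : ℕ) (μ : ℝ) (α : ℤ) : ℝ :=
  if m = 0 then (if α = 0 ∨ α = 1 then 1/2 else 0)
  else if 0 ≤ α ∧ α ≤ (n : ℤ) + 1 then
    (2 : ℝ) ^ (-((n : ℝ) + 1 + (m : ℝ) ^ (-μ))) *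
      (binomZ (n+1) α + 4 * ((2 : ℝ) ^ ((m : ℝ) ^ (-μ)) - 1) * binomZ (n-1) (α-1))
  else 0

/-- The symbol `A^{(n,m)}(z) = Σ_{α=0}^{n+1} a^{(n,m)}_α z^α`. -/
noncomputable def symbolNS (n m : ℕ) (μ : ℝ) (z : ℂ) : ℂ :=
  ∑ α ∈ Finset.range (n+2), (maskNS n m μ (α : ℤ) : ℂ) * z ^ α

/-- Partial product `∏_{k=m}^{N-1} A^{(n,k)}(e^{-iω/2^{k+1}})` of the infinite product
defining the Fourier transform `Φ^{(n,m)}` of the refinable ripplet `φ^{(n,m)}`. -/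
noncomputable def partialProdNS (n m : ℕ) (μ : ℝ) (ω : ℝ) (N : ℕ) : ℂ :=
  ∏ k ∈ Finset.Ico m N, symbolNS n k μ (Complex.exp (-(Complex.I * ω) / 2 ^ (k + 1)))

/-!
The mask `a^{(n,k)}` is real and palindromic, so its symbol is self-reciprocal:
`conj (A(z)) = z ^ (-(n+1)) * A(z)` on the unit circle. At `z = e^{-iω/2^{k+1}}` the factor is the
phase `e^{i(n+1)ω/2^{k+1}}`; over `m ≤ k < N` these phases telescope to
`e^{i(n+1)ω(2^{-m} - 2^{-N})}`, which tends to `e^{i(n+1)2^{-m}ω}`.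
-/

/-- Palindromic coefficients `c 0, …, c d`, those of a self-reciprocal polynomial. The sequence is
unconstrained beyond `d`, and the reflection is an equation `i + j = d` to avoid `d - i`. -/
def IsPalindromic {R : Type*} (c : ℕ → R) (d : ℕ) : Prop :=
  ∀ i j, i + j = d → c i = c j

theorem IsPalindromic.sum_mul_pow_eq {R : Type*} [CommSemiring R] {c : ℕ → R} {d : ℕ}
    (hc : IsPalindromic c d) {w z : R} (hwz : w * z = 1) :
    ∑ j ∈ Finset.range (d + 1), c j * w ^ j =
      w ^ d * ∑ j ∈ Finset.range (d + 1), c j * z ^ j := by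
  rw [← Finset.sum_flip, Finset.mul_sum]
  refine Finset.sum_congr rfl fun j hj => ?_
  have hjd : d - j + j = d := Nat.sub_add_cancel (Finset.mem_range_succ_iff.1 hj)
  calc c (d - j) * w ^ (d - j)
      = c j * w ^ (d - j) * (w * z) ^ j := by rw [hc _ _ hjd, hwz, one_pow, mul_one]
    _ = w ^ (d - j + j) * (c j * z ^ j) := by ring
    _ = w ^ d * (c j * z ^ j) := by rw [hjd]

theorem IsPalindromic.conj_sum_mul_pow {c : ℕ → ℝ} {d : ℕ} (hc : IsPalindromic c d) {z : ℂ}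
    (hz : ‖z‖ = 1) :
    (starRingEnd ℂ) (∑ j ∈ Finset.range (d + 1), (c j : ℂ) * z ^ j) =
      (starRingEnd ℂ) z ^ d * ∑ j ∈ Finset.range (d + 1), (c j : ℂ) * z ^ j := by
  have hc' : IsPalindromic (fun j => (c j : ℂ)) d := fun i j hij => congrArg _ (hc i j hij)
  have hz' : (starRingEnd ℂ) z * z = 1 := by simp [Complex.conj_mul', hz]
  simpa only [map_sum, map_mul, map_pow, conj_ofReal] using hc'.sum_mul_pow_eq hz'

theorem binomZ_symm_of_add_eq {p : ℕ} {q r : ℤ} (h : q + r = p) : binomZ p q = binomZ p r := by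
  have choose_eq_zero {s : ℤ} (hs : (p : ℤ) < s) : p.choose s.toNat = 0 :=
    Nat.choose_eq_zero_of_lt (by omega)
  unfold binomZ
  split_ifs with hq hr hr
  · rw [Nat.choose_symm_of_eq_add (show p = q.toNat + r.toNat by omega)]
  · rw [choose_eq_zero (by omega), Nat.cast_zero]
  · rw [choose_eq_zero (by omega), Nat.cast_zero]
  · rfl

theorem isPalindromic_maskNS {n k : ℕ} (hn : 1 ≤ n) (hk : 1 ≤ k) (μ : ℝ) :
    IsPalindromic (fun α => maskNS n k μ α) (n + 1) := by
  intro i j hij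
  have hk₀ : k ≠ 0 := by omega
  have hi : 0 ≤ (i : ℤ) ∧ (i : ℤ) ≤ n + 1 := by omega
  have hj : 0 ≤ (j : ℤ) ∧ (j : ℤ) ≤ n + 1 := by omega
  have h_main : binomZ (n + 1) i = binomZ (n + 1) j := binomZ_symm_of_add_eq (by omega)
  have h_tension : binomZ (n - 1) (i - 1) = binomZ (n - 1) (j - 1) :=
    binomZ_symm_of_add_eq (by omega)
  simp only [maskNS, if_neg hk₀, if_pos hi, if_pos hj, h_main, h_tension]

theorem conj_symbolNS_of_norm_eq_one {n k : ℕ} (hn : 1 ≤ n) (hk : 1 ≤ k) (μ : ℝ)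
    {z : ℂ} (hz : ‖z‖ = 1) :
    (starRingEnd ℂ) (symbolNS n k μ z) = (starRingEnd ℂ) z ^ (n + 1) * symbolNS n k μ z :=
  (isPalindromic_maskNS hn hk μ).conj_sum_mul_pow hz

theorem conj_exp_neg_I_mul_div_two_pow (ω : ℝ) (k : ℕ) :
    (starRingEnd ℂ) (exp (-(I * ω) / 2 ^ k)) = exp (I * ω / 2 ^ k) := by
  simp [← exp_conj, Complex.conj_ofNat]

theorem norm_exp_neg_I_mul_div_two_pow (ω : ℝ) (k : ℕ) : ‖exp (-(I * ω) / 2 ^ k)‖ = 1 := by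
  have h : -(I * ω) / 2 ^ k = I * ((-ω / 2 ^ k : ℝ) : ℂ) := by push_cast; ring
  rw [h, norm_exp_I_mul_ofReal]

theorem prod_Ico_exp_div_two_pow {m N : ℕ} (hmN : m ≤ N) (z : ℂ) :
    ∏ k ∈ Finset.Ico m N, exp (z / 2 ^ (k + 1)) = exp (z / 2 ^ m - z / 2 ^ N) := by
  have h_halve (k : ℕ) : z / 2 ^ (k + 1) = -(z / 2 ^ (k + 1)) - -(z / 2 ^ k) := by
    field_simp
    ring
  rw [← exp_sum, Finset.sum_congr rfl fun k _ => h_halve k,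
    Finset.sum_Ico_sub (fun k => -(z / 2 ^ k)) hmN, sub_neg_eq_add, neg_add_eq_sub]

theorem conj_partialProdNS {n m N : ℕ} (hn : 1 ≤ n) (hm : 1 ≤ m) (hmN : m ≤ N) (μ ω : ℝ) :
    (starRingEnd ℂ) (partialProdNS n m μ ω N) =
      exp (I * ω / 2 ^ m - I * ω / 2 ^ N) ^ (n + 1) * partialProdNS n m μ ω N := by
  rw [partialProdNS, map_prod, ← prod_Ico_exp_div_two_pow hmN, ← Finset.prod_pow,
    ← Finset.prod_mul_distrib]
  refine Finset.prod_congr rfl fun k hk => ?_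
  have hk₁ : 1 ≤ k := hm.trans (Finset.mem_Ico.1 hk).1
  rw [conj_symbolNS_of_norm_eq_one hn hk₁ μ (norm_exp_neg_I_mul_div_two_pow ω (k + 1)),
    conj_exp_neg_I_mul_div_two_pow]

theorem tendsto_div_two_pow_atTop (z : ℂ) :
    Tendsto (fun N : ℕ => z / 2 ^ N) atTop (nhds 0) := by
  have h : Tendsto (fun N : ℕ => z * (2⁻¹ : ℂ) ^ N) atTop (nhds (z * 0)) :=
    (tendsto_pow_atTop_nhds_zero_of_norm_lt_one (by norm_num)).const_mul z
  simpa only [mul_zero, inv_pow, ← div_eq_mul_inv] using h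

theorem central_symmetry_general {n m : ℕ} (hn : 1 ≤ n) (hm : 1 ≤ m) (μ ω : ℝ) {Φω : ℂ}
    (hΦ : Tendsto (fun N => partialProdNS n m μ ω N) atTop (nhds Φω)) :
    (starRingEnd ℂ) Φω = exp (I * (((n : ℂ) + 1) * 2 ^ (-(m : ℤ)) * ω)) * Φω := by
  have h_conj : Tendsto (fun N => (starRingEnd ℂ) (partialProdNS n m μ ω N)) atTop
      (nhds ((starRingEnd ℂ) Φω)) := (continuous_conj.tendsto _).comp hΦ
  have h_phase : Tendsto (fun N : ℕ => exp (I * ω / 2 ^ m - I * ω / 2 ^ N) ^ (n + 1)) atTop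
      (nhds (exp (I * ω / 2 ^ m - 0) ^ (n + 1))) :=
    ((tendsto_div_two_pow_atTop (I * ω)).const_sub _).cexp.pow _
  have h_eq : ∀ᶠ N in atTop, (starRingEnd ℂ) (partialProdNS n m μ ω N) =
      exp (I * ω / 2 ^ m - I * ω / 2 ^ N) ^ (n + 1) * partialProdNS n m μ ω N :=
    (eventually_ge_atTop m).mono fun N hmN => conj_partialProdNS hn hm hmN μ ω
  rw [tendsto_nhds_unique_of_eventuallyEq h_conj (h_phase.mul hΦ) h_eq, sub_zero, ← exp_nat_mul,
    zpow_neg, zpow_natCast]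
  congr 2
  push_cast
  ring

/-- Central symmetry of `φ^{(n,m)}` (part of Theorem 4.6, Fourier form):
`conj (Φ^{(n,m)}(ω)) = e^{i(n+1)2^{-m}ω} Φ^{(n,m)}(ω)`, i.e. the refinable ripplet is
symmetric about the midpoint of its support. -/
theorem central_symmetry (n : ℕ) (hn : 2 ≤ n) (μ : ℝ) (hμ : 1 < μ)
    (m : ℕ) (hm : 1 ≤ m)
    (Φ : ℝ → ℂ)
    (hΦ : ∀ ω : ℝ, Tendsto (fun N => partialProdNS n m μ ω N) atTop (nhds (Φ ω))) :
    ∀ ω : ℝ, (starRingEnd ℂ) (Φ ω) =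
      Complex.exp (Complex.I * (((n : ℂ) + 1) * 2 ^ (-(m : ℤ)) * ω)) * Φ ω :=
  fun ω => central_symmetry_general (one_le_two.trans hn) hm μ ω (hΦ ω)
end

section
/- (Prewavelet orthogonality, core of Theorem 5.1.) Let φ, χ ∈ L²(ℝ) be compactly supported and let h > 0. Define g_α = ∫_ℝ φ(x) χ(x + hα) dx for α ∈ ℤ (only finitely many g_α are nonzero). Then the function ψ = Σ_{α∈ℤ} (−1)^α g_{α−1} χ(· − hα) satisfies ∫_ℝ ψ(x) φ(x − 2hβ) dx = 0 for every β ∈ ℤ; that is, ψ is orthogonal to every 2h-shift of φ. -/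
open MeasureTheory

/-!
Reindexing by the reflection `α ↦ 2β + 1 - α` exchanges the two correlation factors of
`∫ ψ φ(· - 2βh) = ∑ α, (-1) ^ α * g (α - 1) * g (2β - α)` and flips the sign `(-1) ^ α`, because
`2β + 1` is odd; hence the sum equals its own negative. Integrating the series for `ψ` term by term
only needs `g` to be summable, since by Hölder's inequality the terms `χ(· - αh) φ(· - 2βh)` are
bounded in `L¹` uniformly in `α`.
-/

open Filter Function
open scoped ENNReal Pointwise

section AlternatingSum

theorem tsum_eq_zero_of_equiv_neg {ι M : Type*} [AddCommGroup M] [IsAddTorsionFree M]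
    [TopologicalSpace M] [IsTopologicalAddGroup M] [T2Space M] {f : ι → M} (e : ι ≃ ι)
    (hf : ∀ i, f (e i) = -f i) : ∑' i, f i = 0 :=
  self_eq_neg.mp <| calc
    ∑' i, f i = ∑' i, f (e i) := (e.tsum_eq f).symm
    _ = -∑' i, f i := by simp only [hf, tsum_neg]

theorem neg_one_zpow_odd_sub {K : Type*} [DivisionRing K] {m : ℤ} (hm : Odd m) (α : ℤ) :
    (-1 : K) ^ (m - α) = -(-1) ^ α := by
  rw [zpow_sub₀ (neg_ne_zero.mpr one_ne_zero), hm.neg_one_zpow, neg_div, one_div, ← inv_zpow,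
    inv_neg_one]

theorem tsum_neg_one_zpow_mul_mul_reflect_eq_zero {K : Type*} [Field K] [CharZero K]
    [TopologicalSpace K] [IsTopologicalAddGroup K] [T2Space K] (g : ℤ → K) {n : ℤ} (hn : Even n) :
    ∑' α : ℤ, (-1) ^ α * g (α - 1) * g (n - α) = 0 := by
  refine tsum_eq_zero_of_equiv_neg (Equiv.subLeft (n + 1)) fun α ↦ ?_
  have h_left : n + 1 - α - 1 = n - α := by ring
  have h_right : n - (n + 1 - α) = α - 1 := by ring
  rw [Equiv.subLeft_apply, neg_one_zpow_odd_sub hn.add_one, h_left, h_right]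
  ring

end AlternatingSum

section LpNorm

variable {X E : Type*} [MeasurableSpace X] [NormedAddCommGroup E] {μ : Measure X} {p q r : ℝ≥0∞}

theorem lpNorm_smul_le {R : Type*} [NormedRing R] [MulActionWithZero R E] [IsBoundedSMul R E]
    {f : X → R} {g : X → E} (hf : MemLp f p μ) (hg : MemLp g q μ) [p.HolderTriple q r] :
    lpNorm (f • g) r μ ≤ lpNorm f p μ * lpNorm g q μ := by
  rw [← toReal_eLpNorm hf.aestronglyMeasurable, ← toReal_eLpNorm hg.aestronglyMeasurable,
    ← toReal_eLpNorm (hf.aestronglyMeasurable.smul hg.aestronglyMeasurable), ← ENNReal.toReal_mul]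
  exact ENNReal.toReal_mono (ENNReal.mul_ne_top hf.eLpNorm_ne_top hg.eLpNorm_ne_top)
    (eLpNorm_smul_le_mul_eLpNorm hg.aestronglyMeasurable hf.aestronglyMeasurable)

theorem lpNorm_comp_measurePreserving {Y : Type*} [MeasurableSpace Y] {ν : Measure Y}
    {f : Y → E} (hf : AEStronglyMeasurable f ν) {T : X → Y} (hT : MeasurePreserving T μ ν) :
    lpNorm (f ∘ T) p μ = lpNorm f p ν := by
  rw [← toReal_eLpNorm hf, ← toReal_eLpNorm (hf.comp_measurePreserving hT),
    eLpNorm_comp_measurePreserving hf hT]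

end LpNorm

section Prewavelet

variable {G 𝕜 : Type*} [AddGroup G] [RCLike 𝕜]

section Definitions

variable [MeasurableSpace G] (μ : Measure G) (φ χ : G → 𝕜) (h : G)

/-- The cross-correlation sequence `g_α` of `φ` and `χ` along the multiples of `h`. The pairing is
bilinear, without complex conjugation. -/
noncomputable def crossCorrelation (α : ℤ) : 𝕜 :=
  ∫ x, φ x * χ (x + α • h) ∂μ

/-- The prewavelet `ψ` built from the `h`-translates of `χ` and orthogonal to the `2h`-translates
of `φ`. It is a pointwise sum, with value `0` at points where the series is not summable. -/
noncomputable def prewavelet (x : G) : 𝕜 :=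
  ∑' α : ℤ, (-1) ^ α * crossCorrelation μ φ χ h (α - 1) * χ (x - α • h)

end Definitions

theorem hasFiniteSupport_crossCorrelation [MeasurableSpace G] (μ : Measure G)
    [TopologicalSpace G] [IsTopologicalAddGroup G] {φ χ : G → 𝕜}
    (hφ : HasCompactSupport φ) (hχ : HasCompactSupport χ) {h : G}
    (hh : Tendsto (zmultiplesHom G h) cofinite (cocompact G)) :
    HasFiniteSupport (crossCorrelation μ φ χ h) := by
  have hK : IsCompact (-tsupport φ + tsupport χ) := hφ.isCompact.neg.add hχ.isCompact
  have h_disjoint : ∀ᶠ α : ℤ in cofinite, α • h ∉ -tsupport φ + tsupport χ :=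
    hh.eventually hK.compl_mem_cocompact
  refine h_disjoint.mono fun α hα ↦ ?_
  have h_zero (x : G) : φ x * χ (x + α • h) = 0 := by
    by_contra hx
    have hxφ := subset_tsupport φ (left_ne_zero_of_mul hx)
    have hxχ := subset_tsupport χ (right_ne_zero_of_mul hx)
    exact hα ⟨-x, Set.neg_mem_neg.mpr hxφ, _, hxχ, neg_add_cancel_left x _⟩
  simp [crossCorrelation, h_zero]

variable [MeasurableSpace G] [MeasurableAdd G] {μ : Measure G} [μ.IsAddRightInvariant]

theorem integral_translate_mul_translate (φ χ : G → 𝕜) (h : G) (α γ : ℤ) :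
    ∫ x, χ (x - α • h) * φ (x - γ • h) ∂μ = crossCorrelation μ φ χ h (γ - α) := by
  have h_shift (x : G) : x - γ • h + (γ - α) • h = x - α • h := by
    rw [sub_zsmul, ← add_assoc, sub_add_cancel, ← sub_eq_add_neg]
  rw [crossCorrelation, ← integral_sub_right_eq_self (fun x ↦ φ x * χ (x + (γ - α) • h)) (γ • h)]
  simp only [h_shift, mul_comm (χ _)]

variable {φ χ : G → 𝕜} {p q : ℝ≥0∞} [p.HolderConjugate q]

theorem integrable_translate_mul_translate (hφ : MemLp φ p μ) (hχ : MemLp χ q μ) (a b : G) :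
    Integrable (fun x ↦ χ (x - a) * φ (x - b)) μ :=
  (hχ.comp_measurePreserving (measurePreserving_sub_right μ a)).integrable_mul
    (hφ.comp_measurePreserving (measurePreserving_sub_right μ b))

theorem integral_norm_translate_mul_translate_le (hφ : MemLp φ p μ) (hχ : MemLp χ q μ) (a b : G) :
    ∫ x, ‖χ (x - a) * φ (x - b)‖ ∂μ ≤ lpNorm χ q μ * lpNorm φ p μ := by
  have ha := measurePreserving_sub_right μ a
  have hb := measurePreserving_sub_right μ b
  rw [← lpNorm_one_eq_integral_norm
      (integrable_translate_mul_translate hφ hχ a b).aestronglyMeasurable,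
    ← lpNorm_comp_measurePreserving hχ.aestronglyMeasurable ha,
    ← lpNorm_comp_measurePreserving hφ.aestronglyMeasurable hb]
  exact lpNorm_smul_le (hχ.comp_measurePreserving ha) (hφ.comp_measurePreserving hb)

theorem integral_tsum_translate_mul_translate (hφ : MemLp φ p μ) (hχ : MemLp χ q μ)
    {c : ℤ → 𝕜} (hc : Summable c) (h : G) (γ : ℤ) :
    ∫ x, (∑' α : ℤ, c α * χ (x - α • h)) * φ (x - γ • h) ∂μ =
      ∑' α : ℤ, c α * crossCorrelation μ φ χ h (γ - α) := by
  have h_integrable (α : ℤ) := integrable_translate_mul_translate hφ hχ (α • h) (γ • h)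
  have h_bound (α : ℤ) : ‖∫ x, ‖c α * (χ (x - α • h) * φ (x - γ • h))‖ ∂μ‖ ≤
      ‖c α‖ * (lpNorm χ q μ * lpNorm φ p μ) := by
    rw [Real.norm_of_nonneg (by positivity)]
    simp_rw [norm_mul (c α), integral_const_mul]
    gcongr
    exact integral_norm_translate_mul_translate_le hφ hχ _ _
  calc
    _ = ∫ x, ∑' α : ℤ, c α * (χ (x - α • h) * φ (x - γ • h)) ∂μ := by
      simp_rw [← tsum_mul_right, mul_assoc]
    _ = ∑' α : ℤ, ∫ x, c α * (χ (x - α • h) * φ (x - γ • h)) ∂μ :=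
      (integral_tsum_of_summable_integral_norm (fun α ↦ (h_integrable α).const_mul (c α))
        (.of_norm_bounded (hc.norm.mul_right _) h_bound)).symm
    _ = _ := by simp_rw [integral_const_mul, integral_translate_mul_translate]

theorem prewavelet_orthogonality_general (hφ : MemLp φ p μ) (hχ : MemLp χ q μ) {h : G}
    (hg : Summable (crossCorrelation μ φ χ h)) (β : ℤ) :
    ∫ x, prewavelet μ φ χ h x * φ (x - (2 * β) • h) ∂μ = 0 := by
  have h_coeff : Summable fun α : ℤ ↦ (-1) ^ α * crossCorrelation μ φ χ h (α - 1) :=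
    .of_norm_bounded ((Equiv.subRight (1 : ℤ)).summable_iff.mpr hg.norm) fun α ↦ by simp
  exact (integral_tsum_translate_mul_translate hφ hχ h_coeff h (2 * β)).trans
    (tsum_neg_one_zpow_mul_mul_reflect_eq_zero _ (even_two_mul β))

end Prewavelet

/-- Prewavelet orthogonality (core of Theorem 5.1): with
`g_α = ∫ φ(x) χ(x + hα) dx`, the function
`ψ = Σ_α (−1)^α g_{α−1} χ(· − hα)` is orthogonal to every `2h`-shift of `φ`. -/
theorem prewavelet_orthogonality (φ χ : ℝ → ℝ)
    (hφm : MemLp φ 2 volume) (hχm : MemLp χ 2 volume)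
    (hφs : HasCompactSupport φ) (hχs : HasCompactSupport χ)
    (h : ℝ) (hh : 0 < h)
    (g : ℤ → ℝ) (hg : ∀ α : ℤ, g α = ∫ x : ℝ, φ x * χ (x + h * α))
    (ψ : ℝ → ℝ)
    (hψ : ∀ x : ℝ, ψ x = ∑' α : ℤ, (-1 : ℝ) ^ α * g (α - 1) * χ (x - h * α)) :
    ∀ β : ℤ, ∫ x : ℝ, ψ x * φ (x - 2 * h * β) = 0 := by
  intro β
  have hg_eq (α : ℤ) : g α = crossCorrelation volume φ χ h α := by
    simp only [hg, crossCorrelation, zsmul_eq_mul, mul_comm h]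
  have hψ_eq (x : ℝ) : ψ x = prewavelet volume φ χ h x := by
    simp only [hψ, hg_eq, prewavelet, zsmul_eq_mul, mul_comm h]
  have h_shift : 2 * h * β = (2 * β) • h := by
    rw [zsmul_eq_mul]
    push_cast
    ring
  have h_summable : Summable (crossCorrelation volume φ χ h) :=
    summable_of_hasFiniteSupport <|
      hasFiniteSupport_crossCorrelation volume hφs hχs (Int.tendsto_zmultiplesHom_cofinite hh.ne')
  simp_rw [hψ_eq, h_shift]
  exact prewavelet_orthogonality_general hφm hχm h_summable β
end

section
/- (Prewavelet symbol identity, equation (dnm).) Let φ, χ ∈ L²(ℝ) be compactly supported real functions, h > 0, and let (a_α)_{α∈ℤ} be a finitely supported real sequence such that φ = Σ_{α∈ℤ} a_α χ(· − hα) almost everywhere. Define g_α = ∫_ℝ φ(x) χ(x + hα) dx, η_γ = ∫_ℝ χ(x) χ(x + hγ) dx, and the symbols A(z) = Σ_α a_α z^α and d(z) = Σ_α (−1)^α g_{α−1} z^α. Then for every z ∈ ℂ \ {0}: d(z) = −z · A(−z^{-1}) · Σ_{γ∈ℤ} (−1)^γ η_γ z^γ. -/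
/-!
Inserting the refinement relation into `g` and translating the integral gives
`g_n = Σ_k a_k η_{k+n}`: the sequence `g` is the discrete correlation of `a` with `η`. On symbols
this reads `G(w) = A(w⁻¹) H(w)`, where `H` is the symbol of `η`. The alternating signs and the index
shift turn `d(z)` into `-z G(-z)`, so the identity is the case `w = -z`.
-/

open MeasureTheory

open Function (support)
open scoped Pointwise

section Correlation

variable {G 𝕜 : Type*} [MeasurableSpace G] [RCLike 𝕜]

/-- The correlation `t ↦ ∫ f(x) k(x + t) dμ(x)` of two functions on an additive group. It is
bilinear: there is no complex conjugation. -/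
noncomputable def correlation [Add G] (μ : Measure G) (f k : G → 𝕜) (t : G) : 𝕜 :=
  ∫ x, f x * k (x + t) ∂μ

section Group

variable [AddGroup G] {μ : Measure G}

theorem correlation_comp_sub_right [MeasurableAdd G] [μ.IsAddRightInvariant] (f k : G → 𝕜)
    (s t : G) : correlation μ (fun x ↦ f (x - s)) k t = correlation μ f k (s + t) := by
  unfold correlation
  rw [← integral_add_right_eq_self (fun x ↦ f (x - s) * k (x + t)) s]
  simp only [add_sub_cancel_right, add_assoc]

theorem correlation_of_ae_eq_sum_translates [MeasurableAdd G] [μ.IsAddRightInvariant] {ι : Type*}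
    {p q : ENNReal} [p.HolderConjugate q] {f k φ : G → 𝕜} (hf : MemLp f p μ) (hk : MemLp k q μ)
    {s : Finset ι} {a : ι → 𝕜} {τ : ι → G}
    (hφ : φ =ᵐ[μ] fun x ↦ ∑ i ∈ s, a i * f (x - τ i)) (t : G) :
    correlation μ φ k t = ∑ i ∈ s, a i * correlation μ f k (τ i + t) := by
  have hint (i : ι) : Integrable (fun x ↦ f (x - τ i) * k (x + t)) μ :=
    (hf.comp_measurePreserving (measurePreserving_sub_right μ (τ i))).integrable_mul
      (hk.comp_measurePreserving (measurePreserving_add_right μ t))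
  calc correlation μ φ k t
      = ∫ x, ∑ i ∈ s, a i * (f (x - τ i) * k (x + t)) ∂μ := by
        refine integral_congr_ae ?_
        filter_upwards [hφ] with x hx
        simp only [hx, Finset.sum_mul, mul_assoc]
    _ = ∑ i ∈ s, a i * correlation μ (fun x ↦ f (x - τ i)) k t := by
        rw [integral_finsetSum _ fun i _ ↦ (hint i).const_mul (a i)]
        simp only [integral_const_mul, correlation]
    _ = ∑ i ∈ s, a i * correlation μ f k (τ i + t) := by
        simp only [correlation_comp_sub_right]

theorem support_correlation_subset (f k : G → 𝕜) :
    support (correlation μ f k) ⊆ -support f + support k := by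
  intro t ht
  obtain ⟨x, hx⟩ : ∃ x, f x * k (x + t) ≠ 0 := by
    by_contra! hzero
    exact ht (by simp only [correlation, hzero, integral_zero])
  exact ⟨-x, by simpa using left_ne_zero_of_mul hx, x + t, right_ne_zero_of_mul hx,
    neg_add_cancel_left x t⟩

theorem hasCompactSupport_correlation [TopologicalSpace G] [IsTopologicalAddGroup G]
    {f k : G → 𝕜} (hf : HasCompactSupport f) (hk : HasCompactSupport k) :
    HasCompactSupport (correlation μ f k) :=
  (hf.isCompact.neg.add hk.isCompact).closure_of_subset <|
    (support_correlation_subset f k).trans <|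
      Set.add_subset_add (Set.neg_subset_neg.2 (subset_tsupport f)) (subset_tsupport k)

end Group

end Correlation

theorem finite_support_comp_zsmul {E R : Type*} [AddCommGroup E] [Module ℝ E] [TopologicalSpace E]
    [IsTopologicalAddGroup E] [ContinuousSMul ℝ E] [T2Space E] [Zero R] {f : E → R}
    (hf : HasCompactSupport f) {v : E} (hv : v ≠ 0) :
    (support fun n : ℤ ↦ f (n • v)).Finite := by
  have hclosed : Topology.IsClosedEmbedding fun n : ℤ ↦ n • v := by
    simpa only [Function.comp_def, Int.cast_smul_eq_zsmul] using
      (isClosedEmbedding_smul_left (𝕜 := ℝ) hv).comp Int.isClosedEmbedding_coe_real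
  exact (hf.comp_isClosedEmbedding hclosed).isCompact.finite_of_discrete.subset
    (subset_tsupport _)

section LaurentSymbol

variable {K : Type*} [Field K]

theorem neg_one_zpow_mul_mul_zpow (x z : K) (n : ℤ) : (-1) ^ n * x * z ^ n = x * (-z) ^ n := by
  rw [neg_eq_neg_one_mul z, mul_zpow, mul_left_comm, mul_assoc]

theorem mul_zpow_comp_add_right (c : ℤ → K) {w : K} (hw : w ≠ 0) (m n : ℤ) :
    c (n + m) * w ^ n = w ^ (-m) * (c (n + m) * w ^ (n + m)) := by
  rw [mul_left_comm, ← zpow_add₀ hw, neg_add_cancel_comm_assoc]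

variable [TopologicalSpace K]

/-- The symbol `Σ_n c_n z^n` of a bi-infinite sequence `c`, with value `0` where the series does not
converge unconditionally. -/
noncomputable def laurentSymbol (c : ℤ → K) (z : K) : K :=
  ∑' n : ℤ, c n * z ^ n

theorem laurentSymbol_neg_one_zpow_mul (c : ℤ → K) (z : K) :
    laurentSymbol (fun n ↦ (-1) ^ n * c n) z = laurentSymbol c (-z) := by
  simp only [laurentSymbol, neg_one_zpow_mul_mul_zpow]

variable [IsTopologicalRing K]

theorem summable_mul_zpow_comp_add_right {c : ℤ → K} {w : K} (hw : w ≠ 0)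
    (hc : Summable fun n ↦ c n * w ^ n) (m : ℤ) : Summable fun n ↦ c (n + m) * w ^ n := by
  simp only [mul_zpow_comp_add_right c hw m]
  exact ((Equiv.addRight m).summable_iff.2 hc).mul_left (w ^ (-m))

variable [T2Space K]

theorem laurentSymbol_comp_add_right (c : ℤ → K) {w : K} (hw : w ≠ 0) (m : ℤ) :
    laurentSymbol (fun n ↦ c (n + m)) w = w ^ (-m) * laurentSymbol c w := by
  unfold laurentSymbol
  simp only [mul_zpow_comp_add_right c hw m]
  rw [tsum_mul_left]
  congr 1
  exact (Equiv.addRight m).tsum_eq fun n ↦ c n * w ^ n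

theorem laurentSymbol_sum_mul_comp_add_left {a c : ℤ → K} {s : Finset ℤ} (ha : support a ⊆ s)
    {w : K} (hw : w ≠ 0) (hc : Summable fun n ↦ c n * w ^ n) :
    laurentSymbol (fun n ↦ ∑ k ∈ s, a k * c (k + n)) w =
      laurentSymbol a w⁻¹ * laurentSymbol c w := by
  calc laurentSymbol (fun n ↦ ∑ k ∈ s, a k * c (k + n)) w
      = ∑' n, ∑ k ∈ s, a k * (c (n + k) * w ^ n) := by
        simp only [laurentSymbol, Finset.sum_mul, mul_assoc, add_comm]
    _ = ∑ k ∈ s, a k * laurentSymbol (fun n ↦ c (n + k)) w := by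
        rw [Summable.tsum_finsetSum fun k _ ↦
          (summable_mul_zpow_comp_add_right hw hc k).mul_left (a k)]
        simp only [tsum_mul_left, laurentSymbol]
    _ = (∑ k ∈ s, a k * w⁻¹ ^ k) * laurentSymbol c w := by
        simp only [laurentSymbol_comp_add_right c hw, Finset.sum_mul, mul_assoc, inv_zpow']
    _ = laurentSymbol a w⁻¹ * laurentSymbol c w := by
        rw [laurentSymbol.eq_def a, tsum_eq_sum' ((Function.support_mul_subset_left a _).trans ha)]

end LaurentSymbol

theorem prewavelet_symbol_identity_general {G : Type*} [AddGroup G] [MeasurableSpace G]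
    [MeasurableAdd G] {μ : Measure G} [μ.IsAddRightInvariant] {φ χ : G → ℝ} (hχ : MemLp χ 2 μ)
    {v : G} {a : ℤ → ℝ} (ha : (support a).Finite)
    (href : ∀ᵐ x ∂μ, φ x = ∑' n : ℤ, a n * χ (x - n • v))
    {g η : ℤ → ℝ} (hg : ∀ n : ℤ, g n = correlation μ φ χ (n • v))
    (hη : ∀ n : ℤ, η n = correlation μ χ χ (n • v)) {z : ℂ} (hz : z ≠ 0)
    (hsum : Summable fun n : ℤ ↦ (((-1 : ℝ) ^ n * η n : ℝ) : ℂ) * z ^ n) :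
    laurentSymbol (fun n ↦ (((-1 : ℝ) ^ n * g (n - 1) : ℝ) : ℂ)) z =
      -z * laurentSymbol (fun n ↦ (a n : ℂ)) (-z⁻¹) *
        laurentSymbol (fun n ↦ (((-1 : ℝ) ^ n * η n : ℝ) : ℂ)) z := by
  have hφ : φ =ᵐ[μ] fun x ↦ ∑ n ∈ ha.toFinset, a n * χ (x - n • v) := by
    filter_upwards [href] with x hx
    rw [hx, tsum_eq_sum' ((Function.support_mul_subset_left a _).trans ha.coe_toFinset.ge)]
  have hgη (n : ℤ) : g n = ∑ k ∈ ha.toFinset, a k * η (k + n) := by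
    simp only [hg, hη, correlation_of_ae_eq_sum_translates hχ hχ hφ, add_zsmul]
  have hA : support (fun n ↦ (a n : ℂ)) ⊆ ha.toFinset := fun n hn ↦ by simpa using hn
  have hneg : -z ≠ 0 := neg_ne_zero.2 hz
  have hsum_neg : Summable fun n ↦ (η n : ℂ) * (-z) ^ n := by
    simpa [neg_one_zpow_mul_mul_zpow] using hsum
  push_cast
  rw [laurentSymbol_neg_one_zpow_mul (fun n ↦ (η n : ℂ)),
    laurentSymbol_neg_one_zpow_mul (fun n ↦ (g (n - 1) : ℂ))]
  calc laurentSymbol (fun n ↦ (g (n - 1) : ℂ)) (-z)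
      = -z * laurentSymbol (fun n ↦ (g n : ℂ)) (-z) := by
        simpa [← sub_eq_add_neg] using laurentSymbol_comp_add_right (fun n ↦ (g n : ℂ)) hneg (-1)
    _ = -z * (laurentSymbol (fun n ↦ (a n : ℂ)) (-z)⁻¹ *
          laurentSymbol (fun n ↦ (η n : ℂ)) (-z)) := by
        rw [← laurentSymbol_sum_mul_comp_add_left hA hneg hsum_neg]
        simp only [hgη, Complex.ofReal_sum, Complex.ofReal_mul]
    _ = -z * laurentSymbol (fun n ↦ (a n : ℂ)) (-z⁻¹) *
          laurentSymbol (fun n ↦ (η n : ℂ)) (-z) := by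
        rw [inv_neg, mul_assoc]

/-- Prewavelet symbol identity (equation (dnm)): if `φ = Σ_α a_α χ(· − hα)` a.e., with
cross-correlation `g_α = ∫ φ(x) χ(x + hα) dx` and autocorrelation
`η_γ = ∫ χ(x) χ(x + hγ) dx`, then the prewavelet symbol
`d(z) = Σ_α (−1)^α g_{α−1} z^α` satisfies
`d(z) = −z · A(−z⁻¹) · Σ_γ (−1)^γ η_γ z^γ` for every `z ≠ 0`. -/
theorem prewavelet_symbol_identity (φ χ : ℝ → ℝ)
    (hφm : MemLp φ 2 volume) (hχm : MemLp χ 2 volume)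
    (hφs : HasCompactSupport φ) (hχs : HasCompactSupport χ)
    (h : ℝ) (hh : 0 < h)
    (a : ℤ → ℝ) (ha : (Function.support a).Finite)
    (href : ∀ᵐ x : ℝ, φ x = ∑' α : ℤ, a α * χ (x - h * α))
    (g η : ℤ → ℝ)
    (hg : ∀ α : ℤ, g α = ∫ x : ℝ, φ x * χ (x + h * α))
    (hη : ∀ γ : ℤ, η γ = ∫ x : ℝ, χ x * χ (x + h * γ)) :
    ∀ z : ℂ, z ≠ 0 →
      (∑' α : ℤ, (((-1 : ℝ) ^ α * g (α - 1) : ℝ) : ℂ) * z ^ α) =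
        -z * (∑' α : ℤ, ((a α : ℝ) : ℂ) * (-z⁻¹) ^ α) *
          (∑' γ : ℤ, (((-1 : ℝ) ^ γ * η γ : ℝ) : ℂ) * z ^ γ) := by
  intro z hz
  simp only [mul_comm h, ← zsmul_eq_mul] at href hg hη
  have hηfin : (support η).Finite := by
    rw [funext hη]
    exact finite_support_comp_zsmul (hasCompactSupport_correlation hχs hχs) hh.ne'
  refine prewavelet_symbol_identity_general hχm ha href hg hη hz
    (summable_of_hasFiniteSupport (hηfin.subset fun γ hγ hηγ ↦ hγ ?_))
  simp only [hηγ, mul_zero, Complex.ofReal_zero, zero_mul]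
end

section
/- (Vanishing moments, part of Theorem 5.1.) Let n ≥ 2 and m ≥ 1 be integers. Let φ : ℝ → ℝ be continuous and compactly supported, and suppose that every polynomial p of degree at most n − 2 can be written pointwise as p(x) = Σ_{α∈ℤ} γ_α φ(x − 2^{-m}α) for some real coefficients (γ_α) (locally finite sum). Let ψ : ℝ → ℝ be integrable and compactly supported with ∫_ℝ ψ(x) φ(x − 2^{-m}β) dx = 0 for every β ∈ ℤ. Then ψ has n − 1 vanishing moments: ∫_ℝ x^d ψ(x) dx = 0 for every integer d with 0 ≤ d ≤ n − 2. -/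
open MeasureTheory

/-! The support of `ψ` is compact and meets only finitely many translates of the compact support
of `φ`. Against `ψ`, the series reproducing a function is therefore a finite sum, which may be
integrated term by term, and every term vanishes by orthogonality. -/

open Filter Function

theorem locallyFinite_support_comp_sub {G M ι : Type*} [AddGroup G] [TopologicalSpace G]
    [IsTopologicalAddGroup G] [WeaklyLocallyCompactSpace G] [Zero M] {f : G → M}
    (hf : HasCompactSupport f) {u : ι → G} (hu : Tendsto u cofinite (cocompact G)) :
    LocallyFinite fun i ↦ support fun x ↦ f (x - u i) := by
  intro x
  obtain ⟨K, hK, hxK⟩ := exists_compact_mem_nhds x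
  have hcompact : IsCompact ((fun z : G × G ↦ -z.1 + z.2) '' (tsupport f ×ˢ K)) :=
    (hf.isCompact.prod hK).image (by fun_prop)
  have hfinite := mem_cofinite.1 (hu hcompact.compl_mem_cocompact)
  refine ⟨K, hxK, hfinite.subset ?_⟩
  rintro i ⟨y, hfy, hyK⟩ hi
  exact hi ⟨(y - u i, y), ⟨subset_tsupport f hfy, hyK⟩, by simp⟩

theorem integral_tsum_smul_of_locallyFinite {X ι R E : Type*} [TopologicalSpace X]
    [MeasurableSpace X] {μ : Measure X} [Semiring R] [TopologicalSpace R]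
    [NormedAddCommGroup E] [NormedSpace ℝ E] [Module R E] {f : ι → X → R} {g : X → E}
    (hf : LocallyFinite fun i ↦ support (f i)) (hg : HasCompactSupport g)
    (hfg : ∀ i, Integrable (fun x ↦ f i x • g x) μ) :
    ∫ x, (∑' i, f i x) • g x ∂μ = ∑' i, ∫ x, f i x • g x ∂μ := by
  have hfinite := hf.finite_nonempty_inter_compact hg.isCompact
  have hzero {i x} (hi : i ∉ hfinite.toFinset) (hx : x ∈ tsupport g) : f i x = 0 := by
    by_contra hfx
    exact hi (hfinite.mem_toFinset.2 ⟨x, hfx, hx⟩)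
  have hsum (x : X) : (∑' i, f i x) • g x = ∑ i ∈ hfinite.toFinset, f i x • g x := by
    by_cases hx : x ∈ tsupport g
    · rw [tsum_eq_sum fun i hi ↦ hzero hi hx, Finset.sum_smul]
    · simp [image_eq_zero_of_notMem_tsupport hx]
  have hintegral (i) (hi : i ∉ hfinite.toFinset) : ∫ x, f i x • g x ∂μ = 0 := by
    refine integral_eq_zero_of_ae (.of_forall fun x ↦ ?_)
    by_cases hx : x ∈ tsupport g
    · simp [hzero hi hx]
    · simp [image_eq_zero_of_notMem_tsupport hx]
  calc ∫ x, (∑' i, f i x) • g x ∂μ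
      = ∫ x, ∑ i ∈ hfinite.toFinset, f i x • g x ∂μ := by simp_rw [hsum]
    _ = ∑ i ∈ hfinite.toFinset, ∫ x, f i x • g x ∂μ := integral_finsetSum _ fun i _ ↦ hfg i
    _ = ∑' i, ∫ x, f i x • g x ∂μ := (tsum_eq_sum hintegral).symm

theorem tendsto_mul_intCast_cofinite_cocompact {h : ℝ} (hh : h ≠ 0) :
    Tendsto (fun k : ℤ ↦ h * k) cofinite (cocompact ℝ) :=
  (tendsto_cocompact_mul_left₀ hh).comp Int.tendsto_coe_cofinite

theorem vanishing_moments_general {G ι 𝕜 E : Type*} [AddGroup G] [TopologicalSpace G]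
    [IsTopologicalAddGroup G] [WeaklyLocallyCompactSpace G] [T2Space G] [MeasurableSpace G]
    [OpensMeasurableSpace G] {μ : Measure G} [NormedField 𝕜] [NormedAddCommGroup E]
    [NormedSpace ℝ E] [NormedSpace 𝕜 E] [SMulCommClass ℝ 𝕜 E] {φ : G → 𝕜}
    (hφc : Continuous φ) (hφs : HasCompactSupport φ) {u : ι → G}
    (hu : Tendsto u cofinite (cocompact G)) {p : G → 𝕜} {γ : ι → 𝕜}
    (hp : ∀ x, p x = ∑' i, γ i * φ (x - u i)) {ψ : G → E} (hψi : LocallyIntegrable ψ μ)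
    (hψs : HasCompactSupport ψ) (horth : ∀ i, ∫ x, φ (x - u i) • ψ x ∂μ = 0) :
    ∫ x, p x • ψ x ∂μ = 0 := by
  have hlocfin : LocallyFinite fun i ↦ support fun x ↦ γ i * φ (x - u i) :=
    (locallyFinite_support_comp_sub hφs hu).subset fun i ↦ support_mul_subset_right _ _
  have hintegrable (i : ι) : Integrable (fun x ↦ (γ i * φ (x - u i)) • ψ x) μ :=
    hψi.integrable_smul_left_of_hasCompactSupport (by fun_prop)
      (hφs.comp_homeomorph (Homeomorph.subRight (u i))).mul_left
  simp_rw [hp, integral_tsum_smul_of_locallyFinite hlocfin hψs hintegrable, mul_smul,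
    integral_smul, horth, smul_zero, tsum_zero]

/-- Vanishing moments (part of Theorem 5.1): if the `2^{-m}`-shifts of the continuous
compactly supported function `φ` reproduce all polynomials of degree at most `n − 2`, and
the integrable compactly supported function `ψ` is orthogonal to all `2^{-m}`-shifts of
`φ`, then `ψ` has `n − 1` vanishing moments. -/
theorem vanishing_moments (n m : ℕ) (hn : 2 ≤ n) (hm : 1 ≤ m)
    (φ : ℝ → ℝ) (hφc : Continuous φ) (hφs : HasCompactSupport φ)
    (hrep : ∀ p : Polynomial ℝ, p.degree ≤ (n - 2 : ℕ) →
      ∃ γ : ℤ → ℝ, ∀ x : ℝ,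
        p.eval x = ∑' α : ℤ, γ α * φ (x - (2 : ℝ) ^ (-(m : ℤ)) * α))
    (ψ : ℝ → ℝ) (hψi : Integrable ψ) (hψs : HasCompactSupport ψ)
    (horth : ∀ β : ℤ, ∫ x : ℝ, ψ x * φ (x - (2 : ℝ) ^ (-(m : ℤ)) * β) = 0) :
    ∀ d : ℕ, d ≤ n - 2 → ∫ x : ℝ, x ^ d * ψ x = 0 := by
  intro d hd
  obtain ⟨γ, hγ⟩ := hrep (.X ^ d) (by simpa using hd)
  have hstep : (2 : ℝ) ^ (-(m : ℤ)) ≠ 0 := zpow_ne_zero _ two_ne_zero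
  exact vanishing_moments_general hφc hφs (tendsto_mul_intCast_cofinite_cocompact hstep)
    (fun x ↦ by rw [← hγ, Polynomial.eval_pow, Polynomial.eval_X]) hψi.locallyIntegrable hψs
    (fun β ↦ by simpa only [smul_eq_mul, mul_comm (ψ _)] using horth β)
end
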